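/- arXiv:1708.02665 — 2 statements merged into one kernel-verified Lean document; each statement's English description precedes it below -/
import Mathlib

section
/- Let 1 ∈ A ⊆ B be an inclusion of unital C*-algebras, let E : B → A be a conditional expectation admitting a quasi-basis ((v_1, v_1*), ..., (v_n, v_n*)) (so E is of index-finite type). Then tsr(B) ≤ tsr(A) + n − 1. -/
/-- The set `Lg_n(A)` of left-generating `n`-tuples: tuples `(b 0, …, b (n-1))` such that
`∑ᵢ bᵢ* bᵢ` is invertible. -/
def Lg (A : Type*) [NormedRing A] [StarRing A] (n : ℕ) : Set (Fin n → A) :=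
  {b | IsUnit (∑ i, star (b i) * b i)}

/-- The topological stable rank of a unital (C*-)algebra: the least `n ≥ 1` such that
`Lg_n(A)` is dense in `Aⁿ`, or `∞` if there is no such `n`. -/
noncomputable def tsr (A : Type*) [NormedRing A] [StarRing A] : ℕ∞ :=
  sInf {N : ℕ∞ | ∃ n : ℕ, 1 ≤ n ∧ N = n ∧ Dense (Lg A n)}

/-- A C*-algebra is simple if it is nonzero and has no nontrivial closed two-sided ideals. -/
def CStarSimple (A : Type*) [CStarAlgebra A] : Prop :=
  (0 : A) ≠ 1 ∧ ∀ I : TwoSidedIdeal A, IsClosed (I : Set A) → I = ⊥ ∨ I = ⊤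

/-- A unital C*-algebra is finite if every isometry is a unitary (equivalently, `1` is not
Murray–von Neumann equivalent to a proper subprojection). -/
def CStarFinite (A : Type*) [CStarAlgebra A] : Prop :=
  ∀ v : A, star v * v = 1 → v * star v = 1

/-- A tracial state on a unital C*-algebra: a unital positive linear functional `τ`
with `τ(ab) = τ(ba)`. -/
def IsTracialState (A : Type*) [CStarAlgebra A] (τ : WeakDual ℂ A) : Prop :=
  τ 1 = 1 ∧ (∀ a : A, ∃ r : ℝ, 0 ≤ r ∧ τ (star a * a) = (r : ℂ)) ∧
    ∀ a b : A, τ (a * b) = τ (b * a)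

/-- The trace space `T(A)`, as a subset of the weak-* dual. -/
def TraceSpace (A : Type*) [CStarAlgebra A] : Set (WeakDual ℂ A) :=
  {τ | IsTracialState A τ}

/-- A conditional expectation from `B` onto `A`, relative to a unital embedding
`ι : A → B`: a unital positive `A`-bimodule projection of `B` onto `A`. -/
structure CondExpectation {A B : Type*} [CStarAlgebra A] [CStarAlgebra B]
    (ι : A →⋆ₐ[ℂ] B) where
  toFun : B →L[ℂ] A
  fix : ∀ a : A, toFun (ι a) = a
  left_mod : ∀ (a : A) (b : B), toFun (ι a * b) = a * toFun b
  right_mod : ∀ (a : A) (b : B), toFun (b * ι a) = toFun b * a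
  star_map : ∀ b : B, toFun (star b) = star (toFun b)
  pos : ∀ b : B, ∃ c : A, toFun (star b * b) = star c * c

/-- A quasi-basis for a conditional expectation `E`: a finite family `(v k)` in `B` with
`b = ∑ₖ vₖ E(vₖ* b) = ∑ₖ E(b vₖ) vₖ*` for all `b`. -/
def IsQuasiBasis {A B : Type*} [CStarAlgebra A] [CStarAlgebra B] {ι : A →⋆ₐ[ℂ] B}
    (E : CondExpectation ι) {n : ℕ} (v : Fin n → B) : Prop :=
  ∀ b : B, (b = ∑ k, v k * ι (E.toFun (star (v k) * b))) ∧
    (b = ∑ k, ι (E.toFun (b * v k)) * star (v k))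

/-- An inclusion `A ⊆ B` (given by the unital embedding `ι`) is of index-finite type if
there is a conditional expectation `E : B → A` admitting a finite quasi-basis. -/
def IndexFiniteType {A B : Type*} [CStarAlgebra A] [CStarAlgebra B]
    (ι : A →⋆ₐ[ℂ] B) : Prop :=
  ∃ (E : CondExpectation ι) (n : ℕ) (v : Fin n → B), IsQuasiBasis E v

/-- A realization of the (spatial/maximal, these agree in the nuclear case) C*-tensor
product of `B` and `Z`: a C*-algebra `T` together with commuting unital embeddings of `B`
and `Z` whose images generate `T` as a C*-algebra. -/
structure CStarTensor (B Z T : Type*) [CStarAlgebra B] [CStarAlgebra Z]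
    [CStarAlgebra T] where
  ι₁ : B →⋆ₐ[ℂ] T
  ι₂ : Z →⋆ₐ[ℂ] T
  inj₁ : Function.Injective ι₁
  inj₂ : Function.Injective ι₂
  comm : ∀ (b : B) (z : Z), ι₁ b * ι₂ z = ι₂ z * ι₁ b
  generates :
    (StarAlgebra.adjoin ℂ (Set.range (⇑ι₁) ∪ Set.range (⇑ι₂))).topologicalClosure = ⊤

/-- `B` absorbs `Z` tensorially: `B ⊗ Z ≅ B`. -/
def AbsorbsTensor (B Z : Type*) [CStarAlgebra B] [CStarAlgebra Z] : Prop :=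
  ∃ (T : Type) (_ : CStarAlgebra T) (_ : CStarTensor B Z T), Nonempty (T ≃⋆ₐ[ℂ] B)

/-- The n×n matrix algebra `Mₙ(ℂ)`, realized as operators on `ℂⁿ`. -/
abbrev MatrixAlg (n : ℕ) : Type :=
  EuclideanSpace ℂ (Fin n) →L[ℂ] EuclideanSpace ℂ (Fin n)

/-- A linear map between C*-algebras is completely positive if all of its matrix
amplifications preserve positivity. -/
def IsCompletelyPositive {A B : Type*} [CStarAlgebra A] [CStarAlgebra B]
    (φ : A →L[ℂ] B) : Prop :=
  ∀ (n : ℕ) (x : Matrix (Fin n) (Fin n) A), (∃ y : Matrix (Fin n) (Fin n) A, x = star y * y) →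
    ∃ z : Matrix (Fin n) (Fin n) B, x.map (⇑φ) = star z * z

/-- A C*-algebra is nuclear if the identity map can be approximated pointwise in norm by
unital completely positive maps factoring through matrix algebras. -/
def IsNuclear (A : Type*) [CStarAlgebra A] : Prop :=
  ∀ (s : Finset A) (ε : ℝ), 0 < ε →
    ∃ (n : ℕ) (φ : A →L[ℂ] MatrixAlg n) (ψ : MatrixAlg n →L[ℂ] A),
      IsCompletelyPositive φ ∧ IsCompletelyPositive ψ ∧ φ 1 = 1 ∧ ‖ψ‖ ≤ 1 ∧
      ∀ a ∈ s, ‖ψ (φ a) - a‖ < ε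

/-- The Jiang–Su algebra: the (unique) unital separable simple infinite-dimensional
nuclear C*-algebra with a unique tracial state whose K-theory agrees with that of `ℂ`;
here characterized by the listed properties together with being strongly self-absorbing. -/
structure IsJiangSuAlgebra (Z : Type*) [CStarAlgebra Z] : Prop where
  separable : TopologicalSpace.SeparableSpace Z
  simple : CStarSimple Z
  nuclear : IsNuclear Z
  infiniteDimensional : ¬ FiniteDimensional ℂ Z
  uniqueTracialState : ∃! τ : WeakDual ℂ Z, IsTracialState Z τ
  selfAbsorbing : AbsorbsTensor Z Z

/-- An action of a group `G` on a C*-algebra `A` by *-automorphisms. -/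
structure CStarAction (G : Type*) [Group G] (A : Type*) [CStarAlgebra A] where
  hom : G → (A ≃⋆ₐ[ℂ] A)
  hom_one : ∀ a : A, hom 1 a = a
  hom_mul : ∀ (g h : G) (a : A), hom (g * h) a = hom g (hom h a)

/-- A realization of the C*-crossed product `A ⋊_α G` (for `G` finite, the universal and
reduced crossed products agree): a C*-algebra `B` generated by a copy of `A` and unitaries
`u g` implementing `α`, together with the canonical faithful conditional expectation onto
`A` determined by `E(a u_g) = δ_{g,e} a`. -/
structure CrossedProduct (G : Type*) [Group G] (A : Type*) [CStarAlgebra A]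
    (α : CStarAction G A) (B : Type*) [CStarAlgebra B] where
  ι : A →⋆ₐ[ℂ] B
  inj : Function.Injective ι
  u : G → B
  u_unitary : ∀ g, star (u g) * u g = 1 ∧ u g * star (u g) = 1
  u_mul : ∀ g h, u g * u h = u (g * h)
  u_one : u 1 = 1
  covariant : ∀ (g : G) (a : A), u g * ι a * star (u g) = ι (α.hom g a)
  generates :
    (StarAlgebra.adjoin ℂ (Set.range (⇑ι) ∪ Set.range u)).topologicalClosure = ⊤
  E : B →L[ℂ] B
  E_apply_one : ∀ a : A, E (ι a * u 1) = ι a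
  E_apply_ne : ∀ (a : A) (g : G), g ≠ 1 → E (ι a * u g) = 0
  E_mem : ∀ b, E b ∈ Set.range (⇑ι)
  E_pos : ∀ b : B, ∃ a : A, E (star b * b) = ι (star a * a)
  E_faithful : ∀ b : B, E (star b * b) = 0 → b = 0

/-- Covering dimension at most `n`: every open cover has an open refinement in which each
point lies in at most `n + 1` sets. -/
def CoveringDimLe (X : Type*) [TopologicalSpace X] (n : ℕ) : Prop :=
  ∀ (I : Type) (U : I → Set X), (∀ i, IsOpen (U i)) → (⋃ i, U i) = Set.univ →
    ∃ (J : Type) (V : J → Set X), (∀ j, IsOpen (V j)) ∧ (⋃ j, V j) = Set.univ ∧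
      (∀ j, ∃ i, V j ⊆ U i) ∧
      ∀ x : X, {j | x ∈ V j}.Finite ∧ {j | x ∈ V j}.ncard ≤ n + 1

open scoped CStarAlgebra

section LeftGenerating

variable {R : Type*} [Ring R]

/-- Left generation of a free module passes through elementary row operations: if the rows `X`
generate `Rⁿ` and `r` has first entry `1`, then `r` together with the rows `(0, Xᵢ) + cᵢ r`
(up to adding a combination of the latter to `r`) generates `Rⁿ⁺¹`. -/
lemma span_range_cons_eq_top {N n : ℕ} (r : Fin (n + 1) → R) (hr : r 0 = 1) (c d : Fin N → R)
    (X : Fin N → Fin n → R) (hX : Submodule.span R (Set.range X) = ⊤) :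
    Submodule.span R (Set.range (Fin.cons (r - ∑ i, d i • ((Fin.cons 0 (X i) : Fin (n + 1) → R)
      + c i • r)) (fun i => (Fin.cons 0 (X i) : Fin (n + 1) → R) + c i • r) :
        Fin (N + 1) → Fin (n + 1) → R)) = ⊤ := by
  set P : Fin N → Fin (n + 1) → R := fun i => (Fin.cons 0 (X i) : Fin (n + 1) → R) + c i • r
    with hP
  set S := Submodule.span R (Set.range (Fin.cons (r - ∑ i, d i • P i) P :
    Fin (N + 1) → Fin (n + 1) → R))
  have hPS (i : Fin N) : P i ∈ S := Submodule.subset_span ⟨i.succ, by simp⟩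
  have hrS : r ∈ S := by
    have h0 : r - ∑ i, d i • P i ∈ S := Submodule.subset_span ⟨0, by simp⟩
    simpa using S.add_mem h0 (S.sum_mem (t := Finset.univ) fun i _ =>
      S.smul_mem (d i) (hPS i))
  have hXS (i : Fin N) : (Fin.cons 0 (X i) : Fin (n + 1) → R) ∈ S := by
    simpa [hP] using S.sub_mem (hPS i) (S.smul_mem (c i) hrS)
  have hw (w : Fin n → R) : (Fin.cons 0 w : Fin (n + 1) → R) ∈ S := by
    obtain ⟨a, rfl⟩ := (Submodule.mem_span_range_iff_exists_fun R).1
      (hX ▸ Submodule.mem_top : w ∈ Submodule.span R (Set.range X))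
    have : (Fin.cons 0 (∑ i, a i • X i) : Fin (n + 1) → R)
        = ∑ i, a i • (Fin.cons 0 (X i) : Fin (n + 1) → R) := by
      ext j
      refine Fin.cases ?_ (fun j => ?_) j <;> simp [Finset.sum_apply]
    rw [this]
    exact S.sum_mem fun i _ => S.smul_mem _ (hXS i)
  refine eq_top_iff.2 fun x _ => ?_
  have : x = x 0 • r + (Fin.cons 0 (fun j => x j.succ - x 0 * r j.succ) : Fin (n + 1) → R) := by
    ext j
    refine Fin.cases ?_ (fun j => ?_) j <;> simp [hr]
  rw [this]
  exact S.add_mem (S.smul_mem _ hrS) (hw _)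

variable [TopologicalSpace R]

lemma dense_span_range_eq_top_succ {N : ℕ}
    (h : Dense {c : Fin N → R | Ideal.span (Set.range c) = ⊤}) :
    Dense {c : Fin (N + 1) → R | Ideal.span (Set.range c) = ⊤} := by
  intro c
  have hf : Continuous fun c' : Fin N → R => (Fin.cons (c 0) c' : Fin (N + 1) → R) := by
    fun_prop
  rw [← Fin.cons_self_tail c]
  refine map_mem_closure hf (h (Fin.tail c)) fun c' hc' => ?_
  refine eq_top_iff.2 (hc'.ge.trans (Ideal.span_mono ?_))
  rintro _ ⟨i, rfl⟩
  exact ⟨i.succ, by simp⟩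

/-- If left generating `m`-tuples are dense in `Rᵐ`, then the `(m + n) × (n + 1)` matrices whose
rows generate `Rⁿ⁺¹` as a left module are dense. -/
lemma dense_matrix_span_range_eq_top [IsTopologicalRing R] {m : ℕ}
    (h : Dense {c : Fin m → R | Ideal.span (Set.range c) = ⊤}) (n : ℕ) :
    Dense {M : Fin (m + n) → Fin (n + 1) → R | Submodule.span R (Set.range M) = ⊤} := by
  have hcol (k : ℕ) : Dense {c : Fin (m + k) → R | Ideal.span (Set.range c) = ⊤} := by
    induction k with
    | zero => exact h
    | succ k ih => exact dense_span_range_eq_top_succ ih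
  induction n with
  | zero =>
    intro M
    have hf : Continuous fun (c : Fin (m + 0) → R) (i : Fin (m + 0)) (_ : Fin 1) => c i := by
      fun_prop
    have hM : M = fun i _ => M i 0 := by
      ext i j
      obtain rfl : j = 0 := Fin.fin_one_eq_zero j
      rfl
    rw [hM]
    refine map_mem_closure hf (hcol 0 fun i => M i 0) fun c hc => ?_
    obtain ⟨d, hd⟩ := (Submodule.mem_span_range_iff_exists_fun R).1 ((Ideal.eq_top_iff_one _).1 hc)
    refine eq_top_iff.2 fun x _ => (Submodule.mem_span_range_iff_exists_fun R).2
      ⟨fun i => x 0 * d i, ?_⟩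
    ext j
    obtain rfl : j = 0 := Fin.fin_one_eq_zero j
    simp only [smul_eq_mul] at hd
    simp only [Finset.sum_apply, Pi.smul_apply, smul_eq_mul, mul_assoc, ← Finset.mul_sum]
    exact (congrArg (x 0 * ·) hd).trans (mul_one _)
  | succ n ih =>
    intro M
    change M ∈ closure {M : Fin (m + n + 1) → Fin (n + 1 + 1) → R |
      Submodule.span R (Set.range M) = ⊤}
    change Fin (m + n + 1) → _ at M
    rw [← closure_closure]
    have hf : Continuous fun c : Fin (m + n) → R => (Fin.cons (M 0)
        (fun i => (Fin.cons (c i) (Fin.tail (M i.succ)) : Fin (n + 1 + 1) → R)) :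
        Fin (m + n + 1) → Fin (n + 1 + 1) → R) := by
      fun_prop
    have hM : M = (Fin.cons (M 0) (fun i => (Fin.cons (M i.succ 0) (Fin.tail (M i.succ)) :
        Fin (n + 1 + 1) → R)) : Fin (m + n + 1) → Fin (n + 1 + 1) → R) := by
      simp only [Fin.cons_self_tail]
      exact (Fin.cons_self_tail M).symm
    rw [hM]
    refine map_mem_closure (f := fun c : Fin (m + n) → R => (Fin.cons (M 0)
      (fun i => (Fin.cons (c i) (Fin.tail (M i.succ)) : Fin (n + 1 + 1) → R)) :
      Fin (m + n + 1) → Fin (n + 1 + 1) → R)) hf (hcol n fun i => M i.succ 0) fun c hc => ?_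
    obtain ⟨d, hd⟩ := (Submodule.mem_span_range_iff_exists_fun R).1 ((Ideal.eq_top_iff_one _).1 hc)
    simp only [smul_eq_mul] at hd
    set Q : Fin (m + n) → Fin (n + 1 + 1) → R := fun i => Fin.cons (c i) (Fin.tail (M i.succ))
      with hQ
    set e : Fin (m + n) → R := fun i => (1 - M 0 0) * d i with he
    set r : Fin (n + 1 + 1) → R := M 0 + ∑ i, e i • Q i with hrdef
    have hr : r 0 = 1 := by
      simp [hrdef, hQ, he, Finset.sum_apply, mul_assoc, ← Finset.mul_sum, hd]
    have hg : Continuous fun X : Fin (m + n) → Fin (n + 1) → R =>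
        (Fin.cons (r - ∑ i, e i • ((Fin.cons 0 (X i) : Fin (n + 1 + 1) → R) + c i • r))
          (fun i => (Fin.cons 0 (X i) : Fin (n + 1 + 1) → R) + c i • r) :
          Fin (m + n + 1) → Fin (n + 1 + 1) → R) := by
      fun_prop
    have hrow (i : Fin (m + n)) :
        (Fin.cons 0 (Fin.tail (Q i - c i • r)) : Fin (n + 1 + 1) → R) + c i • r = Q i := by
      ext j
      refine Fin.cases ?_ (fun j => ?_) j
      · simp [hr, hQ]
      · simp [Fin.tail]
    have key := map_mem_closure (t := {M : Fin (m + n + 1) → Fin (n + 1 + 1) → R |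
      Submodule.span R (Set.range M) = ⊤}) hg (ih fun i => Fin.tail (Q i - c i • r)) fun X hX =>
      span_range_cons_eq_top r hr c e X hX
    simp only [hrow] at key
    simpa [hrdef] using key

end LeftGenerating

section CStar

variable {A : Type*} [CStarAlgebra A]

lemma exists_star_sum_mul_sum_le [PartialOrder A] [StarOrderedRing A] {ι : Type*} (s : Finset ι)
    (b d : ι → A) :
    ∃ K : ℝ, 0 ≤ K ∧ star (∑ i ∈ s, d i * b i) * (∑ i ∈ s, d i * b i)
      ≤ K • ∑ i ∈ s, star (b i) * b i := by
  classical
  induction s using Finset.induction_on with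
  | empty => exact ⟨0, le_rfl, by simp⟩
  | insert a s ha ih =>
    obtain ⟨K, hK, h⟩ := ih
    rw [Finset.sum_insert ha, Finset.sum_insert ha]
    set x := d a * b a with hx
    set y := ∑ i ∈ s, d i * b i
    set S := ∑ i ∈ s, star (b i) * b i
    have hS : 0 ≤ S := Finset.sum_nonneg fun i _ => star_mul_self_nonneg _
    have hb : 0 ≤ star (b a) * b a := star_mul_self_nonneg _
    have hpar : star (x + y) * (x + y) ≤ (2 : ℝ) • (star x * x + star y * y) := by
      have := star_mul_self_nonneg (x - y)
      rw [← sub_nonneg]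
      convert this using 1
      simp only [star_add, star_sub, two_smul]
      noncomm_ring
    have hxb : star x * x ≤ ‖star (d a) * d a‖ • (star (b a) * b a) := by
      have := CStarAlgebra.star_left_conjugate_le_norm_smul (a := b a) (b := star (d a) * d a)
      simpa [hx, mul_assoc] using this
    refine ⟨2 * (‖star (d a) * d a‖ + K), by positivity, hpar.trans ?_⟩
    rw [mul_smul]
    refine smul_le_smul_of_nonneg_left ?_ zero_le_two
    calc star x * x + star y * y ≤ ‖star (d a) * d a‖ • (star (b a) * b a) + K • S :=
          add_le_add hxb h
      _ ≤ _ := by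
        rw [add_smul, smul_add, smul_add]
        have h1 := smul_nonneg (norm_nonneg (star (d a) * d a)) hS
        have h2 := smul_nonneg hK hb
        rw [← sub_nonneg]
        convert add_nonneg h1 h2 using 1
        abel

lemma Lg_eq_setOf_span_range_eq_top (N : ℕ) :
    Lg A N = {b | Ideal.span (Set.range b) = ⊤} := by
  ext b
  refine ⟨fun hb => ?_, fun hb => ?_⟩
  · refine Ideal.eq_top_of_isUnit_mem _ ?_ hb
    exact Ideal.sum_mem _ fun i _ => Ideal.mul_mem_left _ _ (Ideal.subset_span ⟨i, rfl⟩)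
  · let _ := CStarAlgebra.spectralOrder A
    have := CStarAlgebra.spectralOrderedRing A
    obtain ⟨d, hd⟩ := (Submodule.mem_span_range_iff_exists_fun A).1 ((Ideal.eq_top_iff_one _).1 hb)
    simp only [smul_eq_mul] at hd
    obtain ⟨K, hK, h⟩ := exists_star_sum_mul_sum_le Finset.univ b d
    rw [hd, star_one, mul_one] at h
    have hu : IsUnit (K • ∑ i, star (b i) * b i) := CStarAlgebra.isUnit_of_le 1 h
    change IsUnit (∑ i, star (b i) * b i)
    rw [← one_mul (∑ i, star (b i) * b i)] at hu
    have hcomm : Commute (algebraMap ℝ A K) (∑ i, star (b i) * b i) := Algebra.commutes K _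
    rw [one_mul, Algebra.smul_def, hcomm.isUnit_mul_iff] at hu
    exact hu.2

end CStar

/-- A density statement for matrices over `A` with `n` columns yields one for tuples in `B`,
by expanding along a quasi-basis of length `n`. -/
lemma dense_Lg_of_quasiBasis {A B : Type*} [CStarAlgebra A] [CStarAlgebra B] {ι : A →⋆ₐ[ℂ] B}
    {E : CondExpectation ι} {n : ℕ} {v : Fin n → B} (hv : IsQuasiBasis E v) {N : ℕ}
    (h : Dense {M : Fin N → Fin n → A | Submodule.span A (Set.range M) = ⊤}) :
    Dense (Lg B N) := by
  intro b
  have hι : Continuous ι := map_continuous ι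
  have hF : Continuous fun (M : Fin N → Fin n → A) (j : Fin N) =>
      ∑ k, ι (M j k) * star (v k) := by
    fun_prop
  have hb : b = fun j => ∑ k, ι (E.toFun (b j * v k)) * star (v k) :=
    funext fun j => (hv (b j)).2
  rw [hb, Lg_eq_setOf_span_range_eq_top]
  refine map_mem_closure hF (h fun j k => E.toFun (b j * v k)) fun M hM => ?_
  obtain ⟨a, ha⟩ := (Submodule.mem_span_range_iff_exists_fun A).1
    (hM.ge Submodule.mem_top : (fun k => E.toFun (1 * v k)) ∈ _)
  refine (Ideal.eq_top_iff_one _).2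
    ((Submodule.mem_span_range_iff_exists_fun B).2 ⟨fun j => ι (a j), ?_⟩)
  rw [(hv 1).2]
  simp only [smul_eq_mul, Finset.mul_sum]
  rw [Finset.sum_comm]
  refine Finset.sum_congr rfl fun k _ => ?_
  rw [← congrFun ha k]
  simp [Finset.sum_apply, Finset.sum_mul, mul_assoc]

/-- if `E : B → A` is a conditional expectation with a quasi-basis of length
`n`, then `tsr B ≤ tsr A + n - 1`. -/
theorem tsr_le_of_quasiBasis (A B : Type*) [CStarAlgebra A] [CStarAlgebra B]
    (ι : A →⋆ₐ[ℂ] B) (hι : Function.Injective ι) (E : CondExpectation ι)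
    (n : ℕ) (v : Fin n → B) (hv : IsQuasiBasis E v) :
    tsr B ≤ tsr A + (n - 1 : ℕ) := by
  rcases Set.eq_empty_or_nonempty {N : ℕ∞ | ∃ m : ℕ, 1 ≤ m ∧ N = m ∧ Dense (Lg A m)}
    with hA | hA
  · simp [tsr, hA]
  obtain ⟨m, hm, hmA, hdense⟩ := csInf_mem hA
  have htsr : tsr A = m := hmA
  rw [htsr]
  refine sInf_le ⟨m + (n - 1), by omega, by push_cast; rfl, dense_Lg_of_quasiBasis hv ?_⟩
  rw [Lg_eq_setOf_span_range_eq_top] at hdense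
  cases n with
  | zero =>
    convert dense_univ
    exact Set.eq_univ_of_forall fun M => Subsingleton.elim _ _
  | succ n => exact dense_matrix_span_range_eq_top hdense n
end

section
/- Let G be a finite group acting on a unital C*-algebra A by an action α. Then the map E : A ⋊_α G → A defined by E(\sum_{g} a_g u_g) = a_e is a conditional expectation of index-finite type, with quasi-basis ((u_g, u_g^*))_{g ∈ G}; in particular tsr(A ⋊_α G) ≤ tsr(A) + |G| − 1. -/
namespace Matrix

/-- A rectangular matrix over a ring is left invertible if it has a left inverse. -/
def LeftInvertible {I J R : Type*} [Fintype I] [DecidableEq J] [Ring R] (M : Matrix I J R) :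
    Prop :=
  ∃ X : Matrix J I R, X * M = 1

section LeftInvertible

variable {R : Type*} [Ring R]

theorem LeftInvertible.of_mul {I J K : Type*} [Fintype I] [Fintype K] [DecidableEq J]
    {P : Matrix K I R} {M : Matrix I J R} (h : (P * M).LeftInvertible) : M.LeftInvertible := by
  obtain ⟨X, hX⟩ := h
  exact ⟨X * P, by rw [Matrix.mul_assoc, hX]⟩

theorem LeftInvertible.reindex {I J I' J' : Type*} [Fintype I] [Fintype I'] [Fintype J]
    [DecidableEq J] [DecidableEq J'] {M : Matrix I J R} (h : M.LeftInvertible)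
    (e : I ≃ I') (f : J ≃ J') : (Matrix.reindex e f M).LeftInvertible := by
  obtain ⟨X, hX⟩ := h
  refine ⟨Matrix.reindex f e X, ?_⟩
  simp [Matrix.submatrix_mul_equiv, hX]

theorem LeftInvertible.fromRows {I J K : Type*} [Fintype I] [Fintype K] [DecidableEq J]
    {M : Matrix I J R} (h : M.LeftInvertible) (N : Matrix K J R) :
    (Matrix.fromRows M N).LeftInvertible := by
  obtain ⟨X, hX⟩ := h
  exact ⟨Matrix.fromCols X 0, by simp [Matrix.fromCols_mul_fromRows, hX]⟩

/-- A block matrix whose first column has left invertible top block is, after row operations,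
left invertible as soon as the remaining Schur-type block `s` is. -/
theorem LeftInvertible.fromBlocks {I J K : Type*} [Fintype I] [Fintype J] [Fintype K]
    [DecidableEq I] [DecidableEq J] [DecidableEq K]
    {c : Matrix I K R} {x : Matrix K I R} (hx : x * c = 1) {s : Matrix I J R}
    (hs : s.LeftInvertible) (d : Matrix K K R) (r : Matrix K J R) :
    (Matrix.fromBlocks c (s + c * r) d (r - (1 - d) * x * (s + c * r))).LeftInvertible := by
  obtain ⟨y, hy⟩ := hs
  refine LeftInvertible.of_mul
    (P := (Matrix.fromBlocks 1 0 ((1 - d) * x) 1 : Matrix (I ⊕ K) (I ⊕ K) R)) ?_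
  refine LeftInvertible.of_mul (P := (Matrix.fromBlocks 1 (-c) 0 1 : Matrix (I ⊕ K) (I ⊕ K) R)) ?_
  refine ⟨Matrix.fromBlocks (-(r * y)) 1 y 0, ?_⟩
  simp [Matrix.fromBlocks_multiply, Matrix.mul_assoc, hx, hy]

variable [TopologicalSpace R]

theorem dense_leftInvertible_reindex {I J I' J' : Type*} [Fintype I] [Fintype I'] [Fintype J]
    [DecidableEq J] [DecidableEq J'] (e : I ≃ I') (f : J ≃ J')
    (h : Dense {M : Matrix I J R | M.LeftInvertible}) :
    Dense {M : Matrix I' J' R | M.LeftInvertible} :=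
  (Matrix.reindex e f).surjective.denseRange.dense_of_mapsTo
    (continuous_id.matrix_reindex e f) h fun _ hM => hM.reindex e f

theorem dense_leftInvertible_fromRows {I J K : Type*} [Fintype I] [Fintype K] [DecidableEq J]
    (h : Dense {M : Matrix I J R | M.LeftInvertible}) :
    Dense {M : Matrix (I ⊕ K) J R | M.LeftInvertible} := by
  intro M
  have hc : Continuous fun N : Matrix I J R => Matrix.fromRows N M.toRows₂ := by
    refine continuous_matrix fun i j => ?_
    rcases i with i | i
    · exact continuous_id.matrix_elem i j
    · exact continuous_const
  have := map_mem_closure hc (h M.toRows₁)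
    (t := {M : Matrix (I ⊕ K) J R | M.LeftInvertible}) fun N hN => hN.fromRows _
  rwa [Matrix.fromRows_toRows] at this

theorem dense_leftInvertible_fromBlocks [IsTopologicalRing R] {I J K : Type*} [Fintype I]
    [Fintype J] [Fintype K] [DecidableEq I] [DecidableEq J] [DecidableEq K]
    (h₁ : Dense {M : Matrix I K R | M.LeftInvertible})
    (h₂ : Dense {M : Matrix I J R | M.LeftInvertible}) :
    Dense {M : Matrix (I ⊕ K) (K ⊕ J) R | M.LeftInvertible} := by
  intro M
  obtain ⟨c₀, a, d, r, rfl⟩ : ∃ c₀ a d r, M = Matrix.fromBlocks c₀ a d r :=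
    ⟨_, _, _, _, M.fromBlocks_toBlocks.symm⟩
  rw [← closure_closure]
  refine map_mem_closure (f := fun c => Matrix.fromBlocks c a d r)
    (continuous_id.matrix_fromBlocks continuous_const continuous_const continuous_const)
    (h₁ c₀) ?_
  rintro c ⟨x, hx⟩
  set r' := (1 - d) * x * a + r with hr'
  have hcont : Continuous fun s : Matrix I J R =>
      Matrix.fromBlocks c (s + c * r') d (r' - (1 - d) * x * (s + c * r')) := by
    have hs : Continuous fun s : Matrix I J R => s + c * r' := continuous_id.add continuous_const
    exact continuous_const.matrix_fromBlocks hs continuous_const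
      (continuous_const.sub (continuous_const.matrix_mul hs))
  have := map_mem_closure hcont (h₂ (a - c * r'))
    (t := {M : Matrix (I ⊕ K) (K ⊕ J) R | M.LeftInvertible})
    fun s hs => LeftInvertible.fromBlocks hx hs d r'
  simpa [hr'] using this

/-- If left invertible columns of height `m` are dense, then so are left invertible matrices of
size `(m + n) × (n + 1)`. -/
theorem dense_leftInvertible_add [IsTopologicalRing R] {m : ℕ}
    (h : Dense {M : Matrix (Fin m) Unit R | M.LeftInvertible}) (n : ℕ) :
    Dense {M : Matrix (Fin (m + n)) (Fin (n + 1)) R | M.LeftInvertible} := by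
  induction n with
  | zero => exact dense_leftInvertible_reindex (Equiv.refl _) finOneEquiv.symm h
  | succ n ih =>
    have hcol : Dense {M : Matrix (Fin (m + n)) (Fin 1) R | M.LeftInvertible} :=
      dense_leftInvertible_reindex finSumFinEquiv finOneEquiv.symm
        (dense_leftInvertible_fromRows (K := Fin n) h)
    exact dense_leftInvertible_reindex (finSumFinEquiv.trans (finCongr (Nat.add_assoc m n 1)))
      (finSumFinEquiv.trans (finCongr (Nat.add_comm 1 (n + 1))))
      (dense_leftInvertible_fromBlocks hcol ih)

end LeftInvertible

end Matrix

/-- In a C*-algebra, a tuple generating the algebra as a left ideal has invertible sum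
`∑ bᵢ* bᵢ`. -/
theorem isUnit_sum_star_mul_self {B : Type*} [CStarAlgebra B] {n : ℕ} {x b : Fin n → B}
    (h : ∑ i, x i * b i = 1) : IsUnit (∑ i, star (b i) * b i) := by
  let _ := CStarAlgebra.spectralOrder B
  have := CStarAlgebra.spectralOrderedRing B
  have key := CStarModule.inner_mul_inner_swap_le (A := B)
    (x := (WithCStarModule.equiv B (Fin n → B)).symm x)
    (y := (WithCStarModule.equiv B (Fin n → B)).symm (fun i => star (b i)))
  simp only [WithCStarModule.pi_inner, WithCStarModule.inner_def,
    WithCStarModule.equiv_symm_pi_apply, ← star_mul, ← star_sum, star_star, h, star_one,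
    mul_one] at key
  have hu := CStarAlgebra.isUnit_of_le 1 key
  rcases eq_or_ne (‖(WithCStarModule.equiv B (Fin n → B)).symm x‖ ^ 2) 0 with h0 | h0
  · rw [h0, zero_smul, isUnit_zero_iff] at hu
    have := subsingleton_of_zero_eq_one hu
    exact isUnit_of_subsingleton _
  · exact (isUnit_smul_iff (Units.mk0 _ h0) _).1 hu

theorem dense_leftInvertible_of_dense_Lg {A : Type*} [NormedRing A] [StarRing A] {m : ℕ}
    (h : Dense (Lg A m)) : Dense {M : Matrix (Fin m) Unit A | M.LeftInvertible} := by
  have hs : Function.Surjective fun b : Fin m → A => (Matrix.of fun i (_ : Unit) => b i) :=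
    fun M => ⟨fun i => M i (), rfl⟩
  refine hs.denseRange.dense_of_mapsTo
    (continuous_matrix fun i _ => continuous_apply i) h fun b hb => ?_
  obtain ⟨v, hv⟩ := IsUnit.exists_left_inv hb
  refine ⟨Matrix.of fun _ i => v * star (b i), ?_⟩
  ext
  simpa [Matrix.mul_apply, mul_assoc, ← Finset.mul_sum] using hv

namespace CrossedProduct

variable {G : Type*} [Group G] {A : Type*} [CStarAlgebra A] {α : CStarAction G A}
  {B : Type*} [CStarAlgebra B] (cp : CrossedProduct G A α B)

theorem star_u (g : G) : star (cp.u g) = cp.u g⁻¹ := by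
  have h : cp.u g * cp.u g⁻¹ = 1 := by rw [cp.u_mul, mul_inv_cancel, cp.u_one]
  exact left_inv_eq_right_inv (cp.u_unitary g).1 h

theorem u_mul_ι (g : G) (a : A) : cp.u g * cp.ι a = cp.ι (α.hom g a) * cp.u g := by
  rw [← cp.covariant, mul_assoc, (cp.u_unitary g).1, mul_one]

/-- To prove a closed additive property of all elements of the crossed product, it suffices to
check it on the elements `a u_g`. -/
theorem induction {p : B → Prop} (hp : IsClosed {b | p b}) (mul : ∀ a g, p (cp.ι a * cp.u g))
    (add : ∀ b c, p b → p c → p (b + c)) (b : B) : p b := by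
  set S : Set B := Set.range fun x : A × G => cp.ι x.1 * cp.u x.2 with hS
  have hmem (a : A) (g : G) : cp.ι a * cp.u g ∈ AddSubmonoid.closure S :=
    AddSubmonoid.subset_closure ⟨(a, g), rfl⟩
  have hclosure : ∀ b ∈ AddSubmonoid.closure S, p b := fun b hb => by
    induction hb using AddSubmonoid.closure_induction with
    | mem b hb => obtain ⟨x, rfl⟩ := hb; exact mul _ _
    | zero => simpa using mul 0 1
    | add b c _ _ hb hc => exact add b c hb hc
  have hadjoin : ∀ b ∈ StarAlgebra.adjoin ℂ (Set.range (⇑cp.ι) ∪ Set.range cp.u),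
      b ∈ AddSubmonoid.closure S := fun b hb => by
    induction hb using StarAlgebra.adjoin_induction with
    | mem b hb =>
      rcases hb with ⟨a, rfl⟩ | ⟨g, rfl⟩
      · simpa [cp.u_one] using hmem a 1
      · simpa using hmem 1 g
    | algebraMap r => simpa [cp.u_one, AlgHomClass.commutes] using hmem (algebraMap ℂ A r) 1
    | add b c _ _ hb hc => exact add_mem hb hc
    | mul b c hb' hc' hb hc =>
      clear hb' hc'
      induction hb, hc using AddSubmonoid.closure_induction₂ with
      | mem b c hb hc =>
        obtain ⟨⟨a, g⟩, rfl⟩ := hb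
        obtain ⟨⟨a', g'⟩, rfl⟩ := hc
        have h : cp.ι a * cp.u g * (cp.ι a' * cp.u g') =
            cp.ι (a * α.hom g a') * cp.u (g * g') := by
          rw [mul_assoc, ← mul_assoc (cp.u g), cp.u_mul_ι, mul_assoc, cp.u_mul, map_mul,
            mul_assoc]
        exact h ▸ hmem _ _
      | zero_left => simp
      | zero_right => simp
      | add_left b c d _ _ _ hb hc => rw [add_mul]; exact add_mem hb hc
      | add_right b c d _ _ _ hb hc => rw [mul_add]; exact add_mem hb hc
    | star b hb' hb =>
      clear hb'
      induction hb using AddSubmonoid.closure_induction with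
      | mem b hb =>
        obtain ⟨⟨a, g⟩, rfl⟩ := hb
        simp only [star_mul, cp.star_u, ← map_star, cp.u_mul_ι]
        exact hmem _ _
      | zero => simp
      | add b c _ _ hb hc => rw [star_add]; exact add_mem hb hc
  have hb : b ∈ closure
      (StarAlgebra.adjoin ℂ (Set.range (⇑cp.ι) ∪ Set.range cp.u) : Set B) := by
    rw [← StarSubalgebra.topologicalClosure_coe, cp.generates]
    trivial
  exact closure_minimal (fun b hb => hclosure b (hadjoin b hb)) hp hb

open Classical in
theorem E_ι_mul_u (a : A) (g : G) : cp.E (cp.ι a * cp.u g) = if g = 1 then cp.ι a else 0 := by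
  split_ifs with h
  · rw [h, cp.E_apply_one]
  · exact cp.E_apply_ne a g h

theorem E_ι_mul (a : A) (b : B) : cp.E (cp.ι a * b) = cp.ι a * cp.E b := by
  induction b using cp.induction with
  | hp => exact isClosed_eq (by fun_prop) (by fun_prop)
  | mul a' g =>
    rw [← mul_assoc, ← map_mul, cp.E_ι_mul_u, cp.E_ι_mul_u]
    split_ifs <;> simp
  | add b c hb hc => rw [mul_add, map_add, hb, hc, map_add, mul_add]

theorem E_mul_ι (a : A) (b : B) : cp.E (b * cp.ι a) = cp.E b * cp.ι a := by
  induction b using cp.induction with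
  | hp => exact isClosed_eq (by fun_prop) (by fun_prop)
  | mul a' g =>
    rw [mul_assoc, cp.u_mul_ι, ← mul_assoc, ← map_mul, cp.E_ι_mul_u, cp.E_ι_mul_u]
    split_ifs with h
    · rw [h, α.hom_one, map_mul]
    · simp
  | add b c hb hc => rw [add_mul, map_add, hb, hc, map_add, add_mul]

theorem E_star (b : B) : cp.E (star b) = star (cp.E b) := by
  induction b using cp.induction with
  | hp => exact isClosed_eq (by fun_prop) (by fun_prop)
  | mul a g =>
    rw [star_mul, cp.star_u, ← map_star, cp.u_mul_ι, cp.E_ι_mul_u, cp.E_ι_mul_u]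
    split_ifs with h h' h'
    · rw [h, α.hom_one, map_star]
    · exact absurd (inv_eq_one.1 h) h'
    · exact absurd (inv_eq_one.2 h') h
    · simp
  | add b c hb hc => rw [star_add, map_add, hb, hc, map_add, star_add]

theorem sum_u_mul_E [Fintype G] (b : B) : ∑ g, cp.u g * cp.E (star (cp.u g) * b) = b := by
  induction b using cp.induction with
  | hp => exact isClosed_eq (by fun_prop) (by fun_prop)
  | mul a h =>
    rw [Finset.sum_eq_single h]
    · rw [cp.star_u, ← mul_assoc, cp.u_mul_ι, mul_assoc, cp.u_mul, inv_mul_cancel,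
        cp.E_apply_one, cp.u_mul_ι, ← α.hom_mul, mul_inv_cancel, α.hom_one]
    · intro g _ hg
      rw [cp.star_u, ← mul_assoc, cp.u_mul_ι, mul_assoc, cp.u_mul, cp.E_apply_ne, mul_zero]
      exact fun e => hg (inv_mul_eq_one.1 e)
    · simp
  | add b c hb hc => simp only [mul_add, map_add, Finset.sum_add_distrib, hb, hc]

theorem sum_E_mul_u [Fintype G] (b : B) : ∑ g, cp.E (b * cp.u g) * star (cp.u g) = b := by
  induction b using cp.induction with
  | hp => exact isClosed_eq (by fun_prop) (by fun_prop)
  | mul a h =>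
    rw [Finset.sum_eq_single h⁻¹]
    · rw [mul_assoc, cp.u_mul, mul_inv_cancel, cp.E_apply_one, cp.star_u, inv_inv]
    · intro g _ hg
      rw [mul_assoc, cp.u_mul, cp.E_apply_ne, zero_mul]
      exact fun e => hg (eq_inv_of_mul_eq_one_right e)
    · simp
  | add b c hb hc => simp only [add_mul, map_add, Finset.sum_add_distrib, hb, hc]

/-- The canonical expectation of a crossed product with values in the coefficient algebra. -/
noncomputable def expectation : B →L[ℂ] A :=
  LinearMap.mkContinuous
    { toFun := fun b => (cp.E_mem b).choose
      map_add' := fun b c => cp.inj (by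
        rw [map_add cp.ι, (cp.E_mem _).choose_spec, (cp.E_mem _).choose_spec,
          (cp.E_mem _).choose_spec, map_add])
      map_smul' := fun r b => cp.inj (by
        rw [map_smul cp.ι, (cp.E_mem _).choose_spec, (cp.E_mem _).choose_spec, map_smul,
          RingHom.id_apply]) }
    ‖cp.E‖ fun b => by
      have h := NonUnitalStarAlgHom.norm_map cp.ι cp.inj (cp.E_mem b).choose
      rw [(cp.E_mem b).choose_spec] at h
      exact h.symm.trans_le (cp.E.le_opNorm b)

theorem ι_expectation (b : B) : cp.ι (cp.expectation b) = cp.E b :=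
  (cp.E_mem b).choose_spec

/-- The canonical conditional expectation of a crossed product onto its coefficient algebra. -/
noncomputable def condExpectation : CondExpectation cp.ι where
  toFun := cp.expectation
  fix a := cp.inj (by simpa [cp.ι_expectation, cp.u_one] using cp.E_apply_one a)
  left_mod a b := cp.inj (by rw [map_mul cp.ι, cp.ι_expectation, cp.ι_expectation, cp.E_ι_mul])
  right_mod a b := cp.inj (by rw [map_mul cp.ι, cp.ι_expectation, cp.ι_expectation, cp.E_mul_ι])
  star_map b := cp.inj (by rw [map_star cp.ι, cp.ι_expectation, cp.ι_expectation, cp.E_star])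
  pos b := (cp.E_pos b).imp fun c hc => cp.inj (by rw [cp.ι_expectation, hc])

theorem isQuasiBasis_u [Fintype G] {n : ℕ} (e : Fin n ≃ G) :
    IsQuasiBasis cp.condExpectation fun k => cp.u (e k) := by
  intro b
  simp only [condExpectation, cp.ι_expectation]
  exact ⟨((e.sum_comp fun g => cp.u g * cp.E (star (cp.u g) * b)).trans (cp.sum_u_mul_E b)).symm,
    ((e.sum_comp fun g => cp.E (b * cp.u g) * star (cp.u g)).trans (cp.sum_E_mul_u b)).symm⟩

theorem dense_Lg_add [Fintype G] (cp : CrossedProduct G A α B) {m n : ℕ}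
    (hn : Fintype.card G = n + 1) (h : Dense (Lg A m)) : Dense (Lg B (m + n)) := by
  classical
  have hM : Dense {M : Matrix (Fin (m + n)) G A | M.LeftInvertible} :=
    Matrix.dense_leftInvertible_reindex (Equiv.refl _) (Fintype.equivFinOfCardEq hn).symm
      (Matrix.dense_leftInvertible_add (dense_leftInvertible_of_dense_Lg h) n)
  let Φ : Matrix (Fin (m + n)) G A → Fin (m + n) → B :=
    fun M i => ∑ g, cp.ι (M i g) * star (cp.u g)
  have hΦ : Function.Surjective Φ := fun b =>
    ⟨Matrix.of fun i g => cp.expectation (b i * cp.u g), by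
      funext i
      simpa [Φ, cp.ι_expectation] using cp.sum_E_mul_u (b i)⟩
  have hι : Continuous cp.ι := (NonUnitalStarAlgHom.isometry cp.ι cp.inj).continuous
  have hcont : Continuous Φ :=
    continuous_pi fun i => continuous_finsetSum _ fun g _ =>
      (hι.comp (continuous_id.matrix_elem i g)).mul continuous_const
  refine hΦ.denseRange.dense_of_mapsTo hcont hM ?_
  rintro M ⟨X, hX⟩
  refine isUnit_sum_star_mul_self (x := fun i => cp.ι (X 1 i)) ?_
  calc ∑ i, cp.ι (X 1 i) * Φ M i
      = ∑ g, cp.ι ((X * M) 1 g) * star (cp.u g) := by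
        simp only [Φ, Matrix.mul_apply, map_sum, map_mul, Finset.mul_sum, Finset.sum_mul,
          mul_assoc]
        exact Finset.sum_comm
    _ = 1 := by
        rw [hX, Finset.sum_eq_single 1]
        · simp [cp.u_one]
        · intro g _ hg
          simp [Matrix.one_apply_ne hg.symm]
        · simp

theorem tsr_le [Fintype G] (cp : CrossedProduct G A α B) :
    tsr B ≤ tsr A + (Fintype.card G - 1 : ℕ) := by
  rcases Set.eq_empty_or_nonempty {N : ℕ∞ | ∃ n : ℕ, 1 ≤ n ∧ N = n ∧ Dense (Lg A n)} with h | h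
  · simp [tsr, h]
  · obtain ⟨m, hm, hN, hd⟩ := csInf_mem h
    have hcard : Fintype.card G = Fintype.card G - 1 + 1 :=
      (Nat.sub_add_cancel Fintype.card_pos).symm
    refine sInf_le ⟨m + (Fintype.card G - 1), by omega, ?_, cp.dense_Lg_add hcard hd⟩
    rw [Nat.cast_add, ← hN, tsr]

end CrossedProduct

/-- the canonical expectation `E(∑ a_g u_g) = a_e` on a crossed product by a
finite group is a conditional expectation of index-finite type with quasi-basis
`(u_g, u_g*)_{g ∈ G}`; in particular `tsr(A ⋊ G) ≤ tsr A + |G| - 1`. -/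
theorem crossedProduct_canonical_condExp (G : Type*) [Group G] [Fintype G]
    (A : Type*) [CStarAlgebra A] (α : CStarAction G A)
    (B : Type*) [CStarAlgebra B] (cp : CrossedProduct G A α B) :
    (∃ E' : CondExpectation cp.ι,
        (∀ b : B, cp.ι (E'.toFun b) = cp.E b) ∧
        IsQuasiBasis E' (fun k : Fin (Fintype.card G) => cp.u ((Fintype.equivFin G).symm k))) ∧
      tsr B ≤ tsr A + (Fintype.card G - 1 : ℕ) := by
  exact ⟨⟨cp.condExpectation, cp.ι_expectation, cp.isQuasiBasis_u _⟩, cp.tsr_le⟩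
end
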